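/- Define G : List Bool → ℝ by G [] = Real.sin (Real.arctan 1) and, for any bit string s, G (s ++ [false]) = Real.sin (Real.arctan (G s)) and G (s ++ [true]) = Real.cos (Real.arctan (G s)). Then for every bit string s, G s = Real.sqrt ((S s : ℝ)). Consequently, for any reduced rational q ∈ (0,1), composing the functions sin ∘ arctan (for the digit 0) and cos ∘ arctan (for the digit 1) according to the S-tree 0-1 sequence of q², applied to cos 0 = 1, yields q. -/

import Mathlib

/-- Helper computing the S-tree value from the reversed 0-1 sequence. -/
def Sa : List Bool → ℚ
  | [] => 1/2
  | b :: t => if b then 1 / (1 + Sa t) else Sa t / (1 + Sa t)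

/-- The S-tree map: `S [] = 1/2`, `S (s ++ [false]) = S s / (1 + S s)` and
`S (s ++ [true]) = 1 / (1 + S s)`. -/
def S (s : List Bool) : ℚ := Sa s.reverse

/-- Helper computing the broken-calculator value from the reversed 0-1 sequence. -/
noncomputable def Ga : List Bool → ℝ
  | [] => Real.sin (Real.arctan 1)
  | b :: t =>
      if b then Real.cos (Real.arctan (Ga t)) else Real.sin (Real.arctan (Ga t))

/-- `G [] = sin (arctan 1)` and, for any bit string `s`,
`G (s ++ [false]) = sin (arctan (G s))` and `G (s ++ [true]) = cos (arctan (G s))`. -/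
noncomputable def G (s : List Bool) : ℝ := Ga s.reverse

/-! For `r ≥ 0`, `sin (arctan √r) = √(r / (1 + r))` and `cos (arctan √r) = √(1 / (1 + r))`: the two
calculator moves send `√r` to the square roots of the two S-tree children of `r`. Hence
`G s = √(S s)` by induction along the 0-1 sequence, starting from `sin (arctan √1) = √(1 / 2)`. -/

theorem sin_arctan_sqrt {r : ℝ} (hr : 0 ≤ r) :
    Real.sin (Real.arctan √r) = √(r / (1 + r)) := by
  rw [Real.sin_arctan, Real.sq_sqrt hr, Real.sqrt_div hr]

theorem cos_arctan_sqrt {r : ℝ} (hr : 0 ≤ r) :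
    Real.cos (Real.arctan √r) = √(1 / (1 + r)) := by
  rw [Real.cos_arctan, Real.sq_sqrt hr, Real.sqrt_div zero_le_one, Real.sqrt_one]

theorem S_nil : S [] = 1 / 2 := rfl

theorem S_append_false (s : List Bool) : S (s ++ [false]) = S s / (1 + S s) := by
  simp [S, Sa]

theorem S_append_true (s : List Bool) : S (s ++ [true]) = 1 / (1 + S s) := by
  simp [S, Sa]

theorem G_nil : G [] = Real.sin (Real.arctan 1) := rfl

theorem G_append_false (s : List Bool) : G (s ++ [false]) = Real.sin (Real.arctan (G s)) := by
  simp [G, Ga]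

theorem G_append_true (s : List Bool) : G (s ++ [true]) = Real.cos (Real.arctan (G s)) := by
  simp [G, Ga]

theorem S_pos (s : List Bool) : 0 < S s := by
  induction s using List.reverseRecOn with
  | nil => norm_num [S_nil]
  | append_singleton s b ih =>
    cases b with
    | false => rw [S_append_false]; positivity
    | true => rw [S_append_true]; positivity

theorem G_eq_sqrt_S (s : List Bool) : G s = √(S s : ℝ) := by
  induction s using List.reverseRecOn with
  | nil =>
    calc G [] = Real.sin (Real.arctan √1) := by rw [G_nil, Real.sqrt_one]
      _ = √(1 / (1 + 1)) := sin_arctan_sqrt zero_le_one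
      _ = √(S [] : ℝ) := by norm_num [S_nil]
  | append_singleton s b ih =>
    have S_nonneg : (0 : ℝ) ≤ S s := mod_cast (S_pos s).le
    cases b with
    | false =>
      rw [G_append_false, ih, sin_arctan_sqrt S_nonneg, S_append_false,
        Rat.cast_div, Rat.cast_add, Rat.cast_one]
    | true =>
      rw [G_append_true, ih, cos_arctan_sqrt S_nonneg, S_append_true,
        Rat.cast_div, Rat.cast_add, Rat.cast_one]

/-- The broken-calculator corollary: `G s = √(S s)` for every bit string `s`;
consequently, for any reduced rational `q ∈ (0,1)`, composing `sin ∘ arctan` (digit 0)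
and `cos ∘ arctan` (digit 1) along the S-tree 0-1 sequence of `q²`, applied to
`cos 0 = 1`, yields `q`. -/
theorem broken_calculator :
    (∀ s : List Bool, G s = Real.sqrt ((S s : ℝ))) ∧
      ∀ (q : ℚ) (s : List Bool), 0 < q → q < 1 → S s = q ^ 2 → G s = (q : ℝ) := by
  refine ⟨G_eq_sqrt_S, fun q s q_pos _ S_eq_sq => ?_⟩
  have q_nonneg : (0 : ℝ) ≤ q := mod_cast q_pos.le
  calc G s = √(S s : ℝ) := G_eq_sqrt_S s
    _ = √((q : ℝ) ^ 2) := by rw [S_eq_sq, Rat.cast_pow]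
    _ = q := Real.sqrt_sq q_nonneg
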